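/- Let v ∈ F_2^n have Hamming weight w ≥ 1 and let H be a parity-check matrix from Gallager's LDPC ensemble G(n, R, s) (a stack of (1-R)s independent blocks, each of the form F·Π with Π a uniform random n×n permutation matrix and F the block-indicator matrix). Then Pr(H v = 0) ≤ (√(2n))^{(1-R)s} · ((1 + (1 - 2w/n)^s)/2)^{n(1-R)}. -/

import Mathlib

/-!
A uniformly permuted copy of `v` is distributed as a vector of i.i.d. Bernoulli(`w / n`) bits
conditioned on having weight `w`. By Stirling, that weight occurs with probability at least
`1 / √(2n)`, so conditioning inflates the probability of any event by a factor of at most `√(2n)`.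
For i.i.d. bits the blocks of coordinates are independent, and a block of size `s` has even parity
with probability `(1 + (1 - 2w/n)^s) / 2`. The `L` permutations are independent, which gives
the `L`-th power.
-/

open Finset Matrix Stirling
open scoped Nat

lemma antitone_log_stirlingSeq_sub :
    Antitone fun k ↦ Real.log (stirlingSeq (k + 1)) - Real.log (stirlingSeq (k + 2)) := by
  refine antitone_nat_of_succ_le fun k ↦
    hasSum_le (fun i ↦ ?_) (log_stirlingSeq_sdiff_hasSum (k + 1)) (log_stirlingSeq_sdiff_hasSum k)
  gcongr
  exact k.le_succ

lemma stirlingSeq_one_mul_self : stirlingSeq 1 * stirlingSeq 1 = 2 * stirlingSeq 2 := by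
  have sqrt_four : √(2 * 2 : ℝ) = 2 := Real.sqrt_mul_self zero_le_two
  rw [stirlingSeq_one, div_mul_div_comm, Real.mul_self_sqrt zero_le_two]
  simp only [stirlingSeq, Nat.factorial_two, Nat.cast_ofNat, sqrt_four]
  field

lemma stirlingSeq_mul_le (a b : ℕ) :
    stirlingSeq (a + 1) * stirlingSeq (b + 1) ≤ 2 * stirlingSeq (a + b + 2) := by
  have pos (k : ℕ) : 0 < stirlingSeq (k + 1) := stirlingSeq'_pos k
  have log_mul_self : Real.log (stirlingSeq 1) + Real.log (stirlingSeq 1) =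
      Real.log 2 + Real.log (stirlingSeq 2) := by
    rw [← Real.log_mul (pos 0).ne' (pos 0).ne', ← Real.log_mul two_ne_zero (pos 1).ne',
      stirlingSeq_one_mul_self]
  rw [← Real.log_le_log_iff (mul_pos (pos a) (pos b)) (mul_pos two_pos (pos (a + b + 1))),
    Real.log_mul (pos a).ne' (pos b).ne', Real.log_mul two_ne_zero (pos (a + b + 1)).ne']
  induction a with
  | zero =>
    have := antitone_log_stirlingSeq_sub b.zero_le
    simp only [zero_add] at this ⊢
    linarith
  | succ a ih =>
    have := antitone_log_stirlingSeq_sub (show a ≤ a + b + 1 by lia)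
    rw [show a + 1 + b + 2 = a + b + 1 + 2 by ring]
    linarith

lemma factorial_eq_stirlingSeq_mul {n : ℕ} (hn : n ≠ 0) :
    (n ! : ℝ) = stirlingSeq n * (√(2 * n) * (n / Real.exp 1) ^ n) := by
  rw [stirlingSeq, div_mul_cancel₀]
  positivity

lemma sqrt_two_mul_mul_sqrt_two_mul_le_add {x y : ℝ} (hx : 0 ≤ x) (hy : 0 ≤ y) :
    √(2 * x) * √(2 * y) ≤ x + y := by
  rw [← Real.sqrt_mul (by positivity), Real.sqrt_le_left (by positivity)]
  nlinarith [sq_nonneg (x - y)]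

lemma factorial_mul_factorial_le_of_ne_zero {a b : ℕ} (ha : a ≠ 0) (hb : b ≠ 0) :
    (a ! * b ! : ℝ) ≤ √(2 * (a + b : ℕ)) * (a + b)! *
      ((a / (a + b : ℕ)) ^ a * (b / (a + b : ℕ)) ^ b) := by
  have stirling_le : stirlingSeq a * stirlingSeq b ≤ 2 * stirlingSeq (a + b) := by
    obtain ⟨a, rfl⟩ := Nat.exists_eq_succ_of_ne_zero ha
    obtain ⟨b, rfl⟩ := Nat.exists_eq_succ_of_ne_zero hb
    convert stirlingSeq_mul_le a b using 3
    lia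
  have sqrt_le := sqrt_two_mul_mul_sqrt_two_mul_le_add (Nat.cast_nonneg (α := ℝ) a) b.cast_nonneg
  have hn : a + b ≠ 0 := by lia
  have hsum : ((a + b : ℕ) : ℝ) ≠ 0 := mod_cast hn
  calc (a ! * b ! : ℝ)
      = (stirlingSeq a * stirlingSeq b) * (√(2 * a) * √(2 * b)) *
          ((a / Real.exp 1) ^ a * (b / Real.exp 1) ^ b) := by
        rw [factorial_eq_stirlingSeq_mul ha, factorial_eq_stirlingSeq_mul hb]
        ring
    _ ≤ (2 * stirlingSeq (a + b)) * (a + b) * ((a / Real.exp 1) ^ a * (b / Real.exp 1) ^ b) := by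
        gcongr
        exact mul_nonneg zero_le_two (by unfold stirlingSeq; positivity)
    _ = √(2 * (a + b : ℕ)) ^ 2 * stirlingSeq (a + b) *
          ((a / Real.exp 1) ^ a * (b / Real.exp 1) ^ b) := by
        rw [Real.sq_sqrt (by positivity)]
        push_cast
        ring
    _ = _ := by
        rw [factorial_eq_stirlingSeq_mul hn]
        generalize ((a + b : ℕ) : ℝ) = n at hsum
        simp only [div_pow, pow_add]
        field

lemma factorial_mul_factorial_le {a b : ℕ} (h : a + b ≠ 0) :
    (a ! * b ! : ℝ) ≤ √(2 * (a + b : ℕ)) * (a + b)! *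
      ((a / (a + b : ℕ)) ^ a * (b / (a + b : ℕ)) ^ b) := by
  have one_le_sqrt {n : ℕ} (hn : n ≠ 0) : 1 ≤ √(2 * n : ℝ) := by
    have : (1 : ℝ) ≤ n := mod_cast Nat.one_le_iff_ne_zero.2 hn
    exact Real.one_le_sqrt.2 (by linarith)
  rcases eq_or_ne a 0 with rfl | ha
  · have hb : b ≠ 0 := by lia
    simpa [hb] using le_mul_of_one_le_left (by positivity) (one_le_sqrt hb)
  rcases eq_or_ne b 0 with rfl | hb
  · simpa [ha] using le_mul_of_one_le_left (by positivity) (one_le_sqrt ha)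
  exact factorial_mul_factorial_le_of_ne_zero ha hb

section Permutations

variable {ι α : Type*} [Fintype ι] [DecidableEq ι] [DecidableEq α]

lemma card_perm_comp_eq_le [Fintype α] (v u : ι → α) :
    #{σ : Equiv.Perm ι | v ∘ σ = u} ≤ ∏ a, (#{j | v j = a})! := by
  simp only [← Fintype.card_subtype, ← DomMulAct.stabilizer_card]
  by_cases h : ∃ τ : Equiv.Perm ι, v ∘ τ = u
  · obtain ⟨τ, rfl⟩ := h
    refine Fintype.card_le_of_injective (fun σ ↦ ⟨σ.1 * τ⁻¹, ?_⟩) fun σ σ' hσ ↦ ?_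
    · rw [Equiv.Perm.coe_mul, ← Function.comp_assoc, σ.2]
      ext; simp
    · simpa [Subtype.ext_iff] using hσ
  · have : IsEmpty {σ : Equiv.Perm ι // v ∘ σ = u} := ⟨fun σ ↦ h ⟨σ, σ.2⟩⟩
    simp

lemma card_perm_comp_mem_mul_prod_le [Fintype α] (v : ι → α) (A : Finset (ι → α))
    {g : α → ℝ} (hg : ∀ a, 0 ≤ g a) :
    #{σ : Equiv.Perm ι | v ∘ σ ∈ A} * ∏ j, g (v j) ≤
      (∏ a, (#{j | v j = a})! : ℕ) * ∑ u ∈ A, ∏ j, g (u j) := by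
  have prod_comp {u : ι → α} {σ : Equiv.Perm ι} (hσ : v ∘ σ = u) :
      ∏ j, g (v j) = ∏ j, g (u j) := by
    subst hσ
    exact (Equiv.prod_comp σ fun j ↦ g (v j)).symm
  calc (#{σ : Equiv.Perm ι | v ∘ σ ∈ A} * ∏ j, g (v j) : ℝ)
      = ∑ u ∈ A, #{σ : Equiv.Perm ι | v ∘ σ = u} * ∏ j, g (u j) := by
        rw [← sum_card_fiberwise_eq_card_filter, Nat.cast_sum, sum_mul]
        refine sum_congr rfl fun u _ ↦ ?_
        obtain empty | ⟨σ, hσ⟩ := eq_empty_or_nonempty ({σ | v ∘ σ = u} : Finset (Equiv.Perm ι))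
        · simp [empty]
        · rw [prod_comp (mem_filter_univ σ |>.1 hσ)]
    _ ≤ ∑ u ∈ A, (∏ a, (#{j | v j = a})! : ℕ) * ∏ j, g (u j) := by
        gcongr with u
        · exact prod_nonneg fun j _ ↦ hg _
        · exact card_perm_comp_eq_le v u
    _ = _ := (mul_sum ..).symm

end Permutations

/-- The probability that a Bernoulli(`p`) random bit takes the value `x`. -/
def bernoulliWeight (p : ℝ) (x : ZMod 2) : ℝ := if x = 0 then 1 - p else p

/-- The nontrivial character of `ZMod 2`, sending `0` to `1` and `1` to `-1`. It turns parities
into products, over which expectations of independent bits factor. -/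
def signChar : AddChar (ZMod 2) ℝ := AddChar.zmodChar 2 (ζ := -1) (by norm_num)

lemma ite_eq_zero_eq_signChar (x : ZMod 2) :
    (if x = 0 then 1 else 0 : ℝ) = (1 + signChar x) / 2 := by
  obtain rfl | rfl : x = 0 ∨ x = 1 := by revert x; decide
  all_goals simp [signChar, AddChar.zmodChar_apply, ZMod.val_one]

lemma signChar_sum {ι : Type*} (s : Finset ι) (x : ι → ZMod 2) :
    signChar (∑ j ∈ s, x j) = ∏ j ∈ s, signChar (x j) :=
  map_prod signChar.toMonoidHom (fun j ↦ Multiplicative.ofAdd (x j)) s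

lemma sum_bernoulliWeight (p : ℝ) : ∑ x, bernoulliWeight p x = 1 := by
  rw [show (univ : Finset (ZMod 2)) = {0, 1} from rfl, sum_pair zero_ne_one]
  simp [bernoulliWeight]

lemma sum_bernoulliWeight_mul_signChar (p : ℝ) :
    ∑ x, bernoulliWeight p x * signChar x = 1 - 2 * p := by
  have signChar_one : signChar 1 = -1 := by
    simp [signChar, AddChar.zmodChar_apply, ZMod.val_one]
  rw [show (univ : Finset (ZMod 2)) = {0, 1} from rfl, sum_pair zero_ne_one,
    AddChar.map_zero_eq_one, signChar_one, bernoulliWeight, bernoulliWeight, if_pos rfl,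
    if_neg one_ne_zero]
  ring

section Weight

variable {ι : Type*} [Fintype ι]

lemma hammingNorm_eq_card_eq_one (v : ι → ZMod 2) : hammingNorm v = #{j | v j = 1} := by
  have ne_zero_iff : ∀ x : ZMod 2, x ≠ 0 ↔ x = 1 := by decide
  simp only [hammingNorm, ne_zero_iff]

lemma hammingNorm_add_card_eq_zero (v : ι → ZMod 2) :
    hammingNorm v + #{j | v j = 0} = Fintype.card ι := by
  rw [add_comm]
  exact card_filter_add_card_filter_not _

lemma one_sub_hammingNorm_div_card [Nonempty ι] (v : ι → ZMod 2) :
    (1 - hammingNorm v / Fintype.card ι : ℝ) = #{j | v j = 0} / Fintype.card ι := by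
  have hn : (Fintype.card ι : ℝ) ≠ 0 := mod_cast Fintype.card_ne_zero
  rw [one_sub_div hn, ← hammingNorm_add_card_eq_zero v, Nat.cast_add, add_sub_cancel_left]

lemma prod_bernoulliWeight (p : ℝ) (v : ι → ZMod 2) :
    ∏ j, bernoulliWeight p (v j) = p ^ hammingNorm v * (1 - p) ^ #{j | v j = 0} := by
  simp only [bernoulliWeight, prod_ite, prod_const]
  exact mul_comm _ _

lemma prod_factorial_card_eq (v : ι → ZMod 2) :
    ∏ a, (#{j | v j = a})! = (hammingNorm v)! * (#{j | v j = 0})! := by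
  rw [hammingNorm_eq_card_eq_one, mul_comm]
  exact Fin.prod_univ_two fun a : ZMod 2 ↦ (#{j | v j = a})!

lemma card_perm_comp_mem_le [Nonempty ι] [DecidableEq ι] (v : ι → ZMod 2)
    (A : Finset (ι → ZMod 2)) :
    #{σ : Equiv.Perm ι | v ∘ σ ∈ A} ≤ √(2 * Fintype.card ι) * (Fintype.card ι)! *
      ∑ u ∈ A, ∏ j, bernoulliWeight (hammingNorm v / Fintype.card ι) (u j) := by
  have one_sub := one_sub_hammingNorm_div_card v
  set p : ℝ := hammingNorm v / Fintype.card ι with hp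
  have weight_nonneg (x : ZMod 2) : 0 ≤ bernoulliWeight p x := by
    rw [bernoulliWeight, one_sub]
    positivity
  have self_pow_pos (k : ℕ) : 0 < (k / Fintype.card ι : ℝ) ^ k := by
    rw [div_pow]
    exact div_pos (mod_cast Nat.pow_self_pos) (by positivity)
  have weight_pos : 0 < ∏ j, bernoulliWeight p (v j) := by
    rw [prod_bernoulliWeight, one_sub]
    exact mul_pos (self_pow_pos _) (self_pow_pos _)
  have stirling : ((hammingNorm v)! * (#{j | v j = 0})! : ℝ) ≤
      √(2 * Fintype.card ι) * (Fintype.card ι)! * ∏ j, bernoulliWeight p (v j) := by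
    rw [prod_bernoulliWeight, one_sub, hp, ← hammingNorm_add_card_eq_zero v]
    refine factorial_mul_factorial_le ?_
    rw [hammingNorm_add_card_eq_zero]
    exact Fintype.card_ne_zero
  refine le_of_mul_le_mul_right ?_ weight_pos
  calc #{σ : Equiv.Perm ι | v ∘ σ ∈ A} * ∏ j, bernoulliWeight p (v j)
      ≤ ((hammingNorm v)! * (#{j | v j = 0})!) * ∑ u ∈ A, ∏ j, bernoulliWeight p (u j) := by
        rw [← Nat.cast_mul, ← prod_factorial_card_eq]
        exact card_perm_comp_mem_mul_prod_le v A weight_nonneg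
    _ ≤ √(2 * Fintype.card ι) * (Fintype.card ι)! * (∏ j, bernoulliWeight p (v j)) *
          ∑ u ∈ A, ∏ j, bernoulliWeight p (u j) := by
        gcongr
        exact sum_nonneg fun u _ ↦ prod_nonneg fun j _ ↦ weight_nonneg _
    _ = _ := mul_right_comm ..

end Weight

lemma sum_even_prod_bernoulliWeight {ι : Type*} [Fintype ι] [DecidableEq ι] (p : ι → ℝ) :
    ∑ x : ι → ZMod 2 with ∑ j, x j = 0, ∏ j, bernoulliWeight (p j) (x j) =
      (1 + ∏ j, (1 - 2 * p j)) / 2 := by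
  calc ∑ x : ι → ZMod 2 with ∑ j, x j = 0, ∏ j, bernoulliWeight (p j) (x j)
      = ∑ x : ι → ZMod 2, ((∏ j, bernoulliWeight (p j) (x j)) +
          ∏ j, bernoulliWeight (p j) (x j) * signChar (x j)) / 2 := by
        rw [sum_filter]
        refine sum_congr rfl fun x _ ↦ ?_
        rw [← mul_boole, ite_eq_zero_eq_signChar, signChar_sum, prod_mul_distrib]
        ring
    _ = ((∏ j, ∑ x, bernoulliWeight (p j) x) +
          ∏ j, ∑ x, bernoulliWeight (p j) x * signChar x) / 2 := by
        simp only [← sum_div, sum_add_distrib, Fintype.prod_sum]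
    _ = (1 + ∏ j, (1 - 2 * p j)) / 2 := by
        simp only [sum_bernoulliWeight, sum_bernoulliWeight_mul_signChar, prod_const_one]

/-- The `F_2`-matrix whose row `i` is the indicator of the `i`-th block of coordinates, where
`f` sends a coordinate to the index of its block. -/
def blockIncidence {ι κ : Type*} [DecidableEq κ] (f : ι → κ) : Matrix κ ι (ZMod 2) :=
  .of fun i j ↦ if f j = i then 1 else 0

lemma blockIncidence_mulVec {ι κ : Type*} [Fintype ι] [DecidableEq κ] (f : ι → κ)
    (u : ι → ZMod 2) (i : κ) : (blockIncidence f *ᵥ u) i = ∑ j : {j // f j = i}, u j := by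
  simp only [mulVec, dotProduct, blockIncidence, of_apply, boole_mul, ← sum_filter]
  exact sum_subtype _ (by simp) u

section Blocks

variable {ι κ : Type*} [Fintype ι] [DecidableEq ι] [Fintype κ] [DecidableEq κ]

lemma sum_prod_fiber {α R : Type*} [Fintype α] [CommSemiring R] (f : ι → κ)
    (g : ∀ i, ({j // f j = i} → α) → R) :
    ∑ u : ι → α, ∏ i, g i (fun j ↦ u j) = ∏ i, ∑ x, g i x := by
  rw [Fintype.prod_sum]
  exact Fintype.sum_equiv
    (Equiv.piCongrFiberwise (γ₁ := fun _ ↦ α) (f := f) fun _ ↦ .refl _) _ _ fun _ ↦ rfl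

lemma sum_blockIncidence_mulVec_eq_zero (f : ι → κ) (p : ι → ℝ) :
    ∑ u : ι → ZMod 2 with blockIncidence f *ᵥ u = 0, ∏ j, bernoulliWeight (p j) (u j) =
      ∏ i, (1 + ∏ j with f j = i, (1 - 2 * p j)) / 2 := by
  calc ∑ u : ι → ZMod 2 with blockIncidence f *ᵥ u = 0, ∏ j, bernoulliWeight (p j) (u j)
      = ∑ u : ι → ZMod 2, ∏ i, if ∑ j : {j // f j = i}, u j = 0 then
          ∏ j : {j // f j = i}, bernoulliWeight (p j) (u j) else 0 := by
        rw [sum_filter]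
        refine sum_congr rfl fun u _ ↦ ?_
        simp only [funext_iff, blockIncidence_mulVec, Pi.zero_apply, Fintype.prod_ite_zero,
          Fintype.prod_fiberwise f fun j ↦ bernoulliWeight (p j) (u j)]
    _ = ∏ i, ∑ x : {j // f j = i} → ZMod 2 with ∑ j, x j = 0,
          ∏ j : {j // f j = i}, bernoulliWeight (p j) (x j) := by
        simp only [sum_filter]
        exact sum_prod_fiber f fun i x ↦
          if ∑ j, x j = 0 then ∏ j : {j // f j = i}, bernoulliWeight (p j) (x j) else 0
    _ = ∏ i, (1 + ∏ j with f j = i, (1 - 2 * p j)) / 2 := by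
        refine prod_congr rfl fun i _ ↦ ?_
        rw [sum_even_prod_bernoulliWeight fun j : {j // f j = i} ↦ p j,
          ← prod_subtype {j | f j = i} (by simp) fun j ↦ 1 - 2 * p j]

end Blocks

lemma card_filter_forall {Λ Ω : Type*} [Fintype Λ] [DecidableEq Λ] [Fintype Ω] (P : Ω → Prop)
    [DecidablePred P] : #{σ : Λ → Ω | ∀ l, P (σ l)} = #{ω | P ω} ^ Fintype.card Λ := by
  rw [← card_univ, ← prod_const, ← Fintype.card_piFinset]
  congr 1
  ext; simp

lemma card_divNat_eq {m s : ℕ} (i : Fin m) : #{j : Fin (m * s) | j.divNat = i} = s := by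
  have divNat_finProdFinEquiv (k : Fin m) (l : Fin s) : (finProdFinEquiv (k, l)).divNat = k :=
    congrArg Prod.fst (finProdFinEquiv.symm_apply_apply (k, l))
  rw [card_filter, ← finProdFinEquiv.sum_comp, Fintype.sum_prod_type]
  simp [divNat_finProdFinEquiv]

theorem stmt_8_general {ι κ Λ : Type*} [Fintype ι] [Nonempty ι] [DecidableEq ι] [Fintype κ]
    [DecidableEq κ] [Fintype Λ] [DecidableEq Λ] (f : ι → κ) (v : ι → ZMod 2) :
    (#{σ : Λ → Equiv.Perm ι | ∀ l, blockIncidence f *ᵥ (v ∘ σ l) = 0} : ℝ) /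
        Fintype.card (Λ → Equiv.Perm ι) ≤
      (√(2 * Fintype.card ι) * ∏ i,
        (1 + (1 - 2 * (hammingNorm v : ℝ) / Fintype.card ι) ^ #{j | f j = i}) / 2) ^
          Fintype.card Λ := by
  rw [card_filter_forall fun σ : Equiv.Perm ι ↦ blockIncidence f *ᵥ (v ∘ σ) = 0, Fintype.card_fun,
    Fintype.card_perm, Nat.cast_pow, Nat.cast_pow, ← div_pow]
  gcongr
  rw [div_le_iff₀ (by positivity), mul_right_comm]
  simpa only [sum_blockIncidence_mulVec_eq_zero, mem_filter_univ, prod_const, mul_div_assoc] using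
    card_perm_comp_mem_le v {u | blockIncidence f *ᵥ u = 0}

/-- For a fixed `v ∈ F_2^n` of weight `w ≥ 1` and `H` from Gallager's LDPC ensemble
`G(n,R,s)` (a stack of `L = (1-R)s` independent blocks `F·Π_i` with `Π_i` uniform random
permutations), `Pr(Hv = 0) ≤ (√(2n))^{(1-R)s} ((1 + (1-2w/n)^s)/2)^{n(1-R)}`. -/
theorem stmt_8 (m s : ℕ) (hs : 0 < s) (hm : 0 < m) (n : ℕ) (hn : n = m * s)
    (R : ℝ) (hR0 : 0 < R) (hR1 : R < 1)
    (L : ℕ) (hL : (L : ℝ) = (1 - R) * s)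
    (F : Matrix (Fin m) (Fin n) (ZMod 2))
    (hF : ∀ i j, F i j = if (j : ℕ) / s = (i : ℕ) then 1 else 0)
    (v : Fin n → ZMod 2) (w : ℕ) (hw1 : 1 ≤ w)
    (hw : (Finset.univ.filter fun j => v j = 1).card = w) :
    (∑ σ : Fin L → Equiv.Perm (Fin n),
        if ∀ i, F.mulVec (fun j => v (σ i j)) = 0 then (1 : ℝ) else 0)
      / (Fintype.card (Fin L → Equiv.Perm (Fin n)) : ℝ)
      ≤ Real.sqrt (2 * n) ^ L
          * ((1 + (1 - 2 * (w : ℝ) / n) ^ s) / 2) ^ ((n : ℝ) * (1 - R)) := by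
  subst hn hw
  have : Nonempty (Fin (m * s)) := ⟨⟨0, by positivity⟩⟩
  have hF_eq : F = blockIncidence Fin.divNat := by
    ext i j
    simp [hF, blockIncidence, Fin.ext_iff]
  have rate : ((m * s : ℕ) : ℝ) * (1 - R) = (m * L : ℕ) := by
    push_cast
    rw [hL]
    ring
  rw [hF_eq, rate, Real.rpow_natCast, pow_mul, ← mul_pow]
  simpa [-prod_div_distrib, hammingNorm_eq_card_eq_one, card_divNat_eq, Function.comp_def] using
    stmt_8_general (Λ := Fin L) Fin.divNat v
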